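/- For every t > 0 and every x > 0, the diffusion kernel has unit mass in the second spatial variable: ∫₀^∞ K(t,x,y) dy = 1. -/

import Mathlib

open Real MeasureTheory

/-- The spatially varying diffusion kernel on `(0,∞)`:
`K(t,x,y) = (πty)^(−1/2) · exp(−(x+y)/t) · cosh(2√(xy)/t)`. -/
noncomputable def diffusionKernel (t x y : ℝ) : ℝ :=
  (Real.pi * t * y) ^ (-(1 : ℝ) / 2) * Real.exp (-(x + y) / t) *
    Real.cosh (2 * Real.sqrt (x * y) / t)

/-!
Completing the square in the exponent shows that the substitution `y = u²`, `x = μ²` turns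
`K(t,x,y) dy` into `(g(u) + g(-u)) du`, where `g` is the Gaussian density of mean `μ` and
variance `t / 2`. The mass of `K` over `(0,∞)` is therefore the mass of `g` over the whole line.
-/

open ProbabilityTheory
open scoped NNReal

section HalfLine

variable {E : Type*} [NormedAddCommGroup E] [NormedSpace ℝ E]

theorem integral_Ioi_add_comp_neg {f : ℝ → E} (hf : Integrable f) :
    ∫ u in Set.Ioi (0 : ℝ), (f u + f (-u)) = ∫ u, f u := by
  rw [integral_add hf.integrableOn hf.comp_neg.integrableOn, integral_comp_neg_Ioi, neg_zero,
    add_comm, intervalIntegral.integral_Iic_add_Ioi hf.integrableOn hf.integrableOn]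

theorem integral_Ioi_two_mul_smul_comp_sq (f : ℝ → E) :
    ∫ u in Set.Ioi (0 : ℝ), (2 * u) • f (u ^ 2) = ∫ y in Set.Ioi (0 : ℝ), f y := by
  have two_sub_one : (2 : ℝ) - 1 = 1 := by norm_num
  simpa only [two_sub_one, rpow_one, rpow_two] using
    integral_comp_rpow_Ioi_of_pos (g := f) two_pos

end HalfLine

theorem gaussianPDFReal_eq_mul_exp_mul_exp (μ : ℝ) (v : ℝ≥0) (u : ℝ) :
    gaussianPDFReal μ v u =
      (√(2 * π * v))⁻¹ * (exp (-(μ ^ 2 + u ^ 2) / (2 * v)) * exp (μ * u / v)) := by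
  rw [gaussianPDFReal, ← exp_add]
  congr 2
  ring

theorem gaussianPDFReal_add_gaussianPDFReal_neg (μ : ℝ) (v : ℝ≥0) (u : ℝ) :
    gaussianPDFReal μ v u + gaussianPDFReal μ v (-u) =
      2 * ((√(2 * π * v))⁻¹ * exp (-(μ ^ 2 + u ^ 2) / (2 * v)) * cosh (μ * u / v)) := by
  simp only [gaussianPDFReal_eq_mul_exp_mul_exp, cosh_eq, neg_sq, mul_neg, neg_div]
  ring

theorem diffusionKernel_sq_sq (v : ℝ≥0) (μ : ℝ) {u : ℝ} (hu : 0 ≤ u) :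
    diffusionKernel (2 * v) (μ ^ 2) (u ^ 2) =
      u⁻¹ * ((√(2 * π * v))⁻¹ * exp (-(μ ^ 2 + u ^ 2) / (2 * v)) * cosh (μ * u / v)) := by
  have prefactor : (π * (2 * v) * u ^ 2) ^ (-(1 : ℝ) / 2) = u⁻¹ * (√(2 * π * v))⁻¹ := by
    rw [neg_div, rpow_neg (by positivity), ← sqrt_eq_rpow, sqrt_mul' _ (sq_nonneg u),
      sqrt_sq hu, mul_inv_rev, mul_left_comm, mul_assoc]
  have cosh_factor : cosh (2 * √(μ ^ 2 * u ^ 2) / (2 * v)) = cosh (μ * u / v) := by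
    rw [← mul_pow, sqrt_sq_eq_abs, mul_div_mul_left _ _ two_ne_zero, ← cosh_abs (μ * u / v),
      abs_div, NNReal.abs_eq]
  rw [diffusionKernel, prefactor, cosh_factor]
  ring

theorem two_mul_mul_diffusionKernel_sq_sq (v : ℝ≥0) (μ : ℝ) {u : ℝ} (hu : 0 < u) :
    2 * u * diffusionKernel (2 * v) (μ ^ 2) (u ^ 2) =
      gaussianPDFReal μ v u + gaussianPDFReal μ v (-u) := by
  rw [diffusionKernel_sq_sq v μ hu.le, gaussianPDFReal_add_gaussianPDFReal_neg, mul_assoc,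
    mul_inv_cancel_left₀ hu.ne']

/-- For every `t > 0` and `x > 0`, the diffusion kernel has unit mass in the second spatial
variable: `∫₀^∞ K(t,x,y) dy = 1`. -/
theorem diffusionKernel_unit_mass (t x : ℝ) (ht : 0 < t) (hx : 0 < x) :
    ∫ y in Set.Ioi (0 : ℝ), diffusionKernel t x y = 1 := by
  obtain ⟨v, rfl⟩ : ∃ v : ℝ≥0, 2 * (v : ℝ) = t :=
    ⟨⟨t / 2, (half_pos ht).le⟩, mul_div_cancel₀ t two_ne_zero⟩
  have hv : v ≠ 0 := by
    rintro rfl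
    simp at ht
  obtain ⟨μ, rfl⟩ : ∃ μ : ℝ, μ ^ 2 = x := ⟨√x, sq_sqrt hx.le⟩
  calc ∫ y in Set.Ioi (0 : ℝ), diffusionKernel (2 * v) (μ ^ 2) y
    _ = ∫ u in Set.Ioi (0 : ℝ), 2 * u * diffusionKernel (2 * v) (μ ^ 2) (u ^ 2) :=
      (integral_Ioi_two_mul_smul_comp_sq _).symm
    _ = ∫ u in Set.Ioi (0 : ℝ), (gaussianPDFReal μ v u + gaussianPDFReal μ v (-u)) :=
      setIntegral_congr_fun measurableSet_Ioi fun _ hu ↦ two_mul_mul_diffusionKernel_sq_sq v μ hu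
    _ = ∫ u, gaussianPDFReal μ v u := integral_Ioi_add_comp_neg (integrable_gaussianPDFReal μ v)
    _ = 1 := integral_gaussianPDFReal_eq_one μ hv
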